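/- Fix integers k ≥ 2 and n ≥ 1, a real L > k⁴, and a valid coloring g : G → {0,1,…,k} of the grid G = {0,…,2ⁿ−1}^k. Let p ∈ [0, 2ⁿ−1]^k and, for j = 1,…,k⁴, let p^j = p + ((j−1)/L)·(1,…,1). For each j, let r^j ∈ ℝ^k be a vector such that: if p^j is poorly positioned (with respect to L) then ‖r^j‖_∞ ≤ 1, and if p^j is well-positioned then r^j = ζ(p^j). If ‖Σ_{j=1}^{k⁴} r^j‖_∞ < 1, then the set Q_w = {π(p^j) : p^j is well-positioned} is contained in the unit hypercube K_{π(p)} and contains, for every color c ∈ {0,1,…,k}, a point q with g(q) = c; i.e., Q_w yields a panchromatic simplex. -/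

import Mathlib

/-!
Let `S c` be the number of well-positioned samples whose grid point has color `c`.

* Since `k ^ 4 / L < 1`, every coordinate of the sample moves by less than one unit, so its floor
  grows by at most one (`gridPoint_shift_mem_unitCube`).
* In a fixed coordinate at most one sample is poorly positioned: consecutive samples are `1 / L`
  apart, more than the width `1 / L²` of a bad interval, and the whole run of samples is too short
  to meet two bad intervals (`poor_unique`). Hence at most `k` samples are poor.
* Coordinate `i` of the sum over the well-positioned samples is `S (i + 1) - S 0`. The whole sum is
  less than `1` in absolute value and the poor samples contribute at most `k`, so
  `|S (i + 1) - S 0| ≤ k` for each `i`.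
* If some `S c` vanished, then `S 0 ≤ k` and all the other counts would be at most `2 * k`, giving at
  most `k + 2 * k ^ 2` well-positioned samples, whereas there are at least `k ^ 4 - k`
  (`count_pos`).
-/

open BigOperators

/-- A real number `a ≥ 0` is poorly positioned (w.r.t. `L`) if `a = t + ε` for
some nonnegative integer `t` and some `ε` with `1 − 1/L² < ε < 1`. -/
def PoorlyPositioned (L a : ℝ) : Prop :=
  ∃ t : ℕ, ∃ ε : ℝ, a = t + ε ∧ 1 - 1 / L ^ 2 < ε ∧ ε < 1

/-- `π(p) ∈ G = {0,…,2ⁿ−1}^k`: the `i`-th coordinate is the largest integer in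
`{0,…,2ⁿ−1}` that is `≤ p i`. -/
noncomputable def gridPoint (n k : ℕ) (p : Fin k → ℝ) : Fin k → ℤ :=
  fun i => min ⌊p i⌋ (2 ^ n - 1)

/-- The set of corners of the unit hypercube with lowest corner `q`. -/
def unitCube {k : ℕ} (q : Fin k → ℤ) : Set (Fin k → ℤ) :=
  {q' | ∀ i, q' i = q i ∨ q' i = q i + 1}

/-- Increment vectors: `e⁰ = (−1,…,−1)` for color `0`, and for color
`c ∈ {1,…,k}` the standard basis vector of coordinate `c`. -/
def incVec (k : ℕ) : Fin (k + 1) → Fin k → ℝ :=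
  fun c i => if (c : ℕ) = 0 then -1 else if (i : ℕ) + 1 = (c : ℕ) then 1 else 0

/-- A coloring `g : G → {0,1,…,k}` is valid if for every boundary point `q` of
the grid `G = {0,…,2ⁿ−1}^k`: if all coordinates of `q` are positive then
`g q = 0`, and otherwise `g q = max{i : q_i = 0}` (colors being indexed so
that coordinate `i` of `Fin k` corresponds to color `i+1`). -/
def ValidColoring (n k : ℕ) (g : (Fin k → ℤ) → Fin (k + 1)) : Prop :=
  ∀ q : Fin k → ℤ, (∀ i, 0 ≤ q i ∧ q i ≤ 2 ^ n - 1) →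
    (∃ i, q i = 0 ∨ q i = 2 ^ n - 1) →
    ((∀ i, 0 < q i) → g q = 0) ∧
    (∀ i : Fin k, q i = 0 → (∀ i' : Fin k, q i' = 0 → i' ≤ i) →
      (g q : ℕ) = (i : ℕ) + 1)

/-- Adding less than one unit to every coordinate, truncation at the upper face of the grid
included, stays inside the unit cube of the starting grid point. -/
lemma gridPoint_shift_mem_unitCube (n k : ℕ) (p : Fin k → ℝ) (s : ℝ) (hs0 : 0 ≤ s) (hs1 : s < 1) :
    gridPoint n k (fun i => p i + s) ∈ unitCube (gridPoint n k p) := by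
  intro i
  have h1 : ⌊p i⌋ ≤ ⌊p i + s⌋ := Int.floor_mono (by linarith)
  have h2 : ⌊p i + s⌋ ≤ ⌊p i⌋ + 1 := by
    rw [← Int.floor_add_one]
    exact Int.floor_mono (by linarith)
  simp only [gridPoint]
  omega

/-- In one coordinate, no two samples `a + j / L` and `a + j' / L` are both poorly positioned: their
distance lies in `[1 / L, 1 - 1 / L)`, whereas the distance of two poorly positioned reals differs
from an integer by less than `1 / L²`. -/
lemma poor_unique {N : ℕ} {L : ℝ} (hN : 1 ≤ N) (hL : (N : ℝ) < L) (a : ℝ) {j j' : ℕ} (hjj : j < j')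
    (hj' : j' < N) (h : PoorlyPositioned L (a + (j : ℝ) / L))
    (h' : PoorlyPositioned L (a + (j' : ℝ) / L)) : False := by
  obtain ⟨t, ε, e, l, u⟩ := h
  obtain ⟨t', ε', e', l', u'⟩ := h'
  have hN1 : (1 : ℝ) ≤ N := by exact_mod_cast hN
  have hL1 : 1 < L := by linarith
  have hL0 : 0 < L := by linarith
  set x := 1 / L with hx
  have hx0 : 0 < x := by positivity
  have hxL : x * L = 1 := by rw [hx]; field_simp
  have hx1 : x < 1 := by nlinarith
  have hsq : 1 / L ^ 2 = x * x := by rw [hx]; field_simp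
  have hxx : x * x < x := by nlinarith
  rw [hsq] at l l'
  rw [div_eq_mul_one_div, ← hx] at e e'
  have d1 : (j : ℝ) + 1 ≤ j' := by exact_mod_cast hjj
  have d2 : (j' : ℝ) + 1 ≤ N := by exact_mod_cast hj'
  have d3 : (0 : ℝ) ≤ j := Nat.cast_nonneg j
  have low : x ≤ j' * x - j * x := by nlinarith
  have high : j' * x - j * x < 1 - x := by nlinarith
  have a1 : (0 : ℝ) < (t' : ℝ) - t := by linarith
  have a2 : (t' : ℝ) - t < 1 := by linarith
  have b1 : t < t' := by exact_mod_cast (by linarith : (t : ℝ) < t')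
  have b2 : t' < t + 1 := by exact_mod_cast (by linarith : (t' : ℝ) < t + 1)
  omega

/-- Color counts that are pairwise balanced against color `0` up to an error `k`, with total at
least `k ^ 4 - k`, are all positive. -/
lemma count_pos {k : ℕ} (hk : 2 ≤ k) (S : Fin (k + 1) → ℕ) (hS : k ^ 4 ≤ (∑ c, S c) + k)
    (h1 : ∀ i : Fin k, S i.succ ≤ S 0 + k) (h2 : ∀ i : Fin k, S 0 ≤ S i.succ + k)
    (c : Fin (k + 1)) : 0 < S c := by
  by_contra hc
  have h0 : S 0 ≤ k := by
    induction c using Fin.cases with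
    | zero => omega
    | succ i => have := h2 i; omega
  have hle : ∑ i : Fin k, S i.succ ≤ k * (2 * k) := by
    calc ∑ i : Fin k, S i.succ ≤ ∑ _i : Fin k, 2 * k :=
          Finset.sum_le_sum fun i _ => by have := h1 i; omega
      _ = k * (2 * k) := by simp
  rw [Fin.sum_univ_succ] at hS
  have e : k ^ 4 = (k * k) * (k * k) := by ring
  have e4 : 4 ≤ k * k := by nlinarith
  nlinarith

lemma incVec_eq (k : ℕ) (c : Fin (k + 1)) (i : Fin k) :
    incVec k c i = (if c = i.succ then 1 else 0) - (if c = 0 then 1 else 0) := by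
  induction c using Fin.cases with
  | zero => simp [incVec, (Fin.succ_ne_zero i).symm]
  | succ a => simp [incVec, Fin.ext_iff, eq_comm]

/-- The counting argument on an arbitrary finite family of samples `j` with colors `col j`: if at
most `k` samples are poor and the increments nearly cancel, every color is hit by a well-positioned
sample. -/
lemma exists_color {k : ℕ} (hk : 2 ≤ k) (poor : Fin (k ^ 4) → Prop)
    (hcard : {j | poor j}.ncard ≤ k) (col : Fin (k ^ 4) → Fin (k + 1))
    (r : Fin (k ^ 4) → Fin k → ℝ) (hpoor : ∀ j, poor j → ∀ i, |r j i| ≤ 1)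
    (hwell : ∀ j, ¬ poor j → r j = incVec k (col j))
    (hsum : ∀ i : Fin k, |∑ j : Fin (k ^ 4), r j i| < 1) (c : Fin (k + 1)) :
    ∃ j, ¬ poor j ∧ col j = c := by
  classical
  rw [Set.ncard_eq_toFinset_card', Set.toFinset_ofPred] at hcard
  let W : Finset (Fin (k ^ 4)) := Finset.univ.filter fun j => ¬ poor j
  let S : Fin (k + 1) → ℕ := fun c => (W.filter fun j => col j = c).card
  have htot : ∑ c, S c = W.card :=
    (Finset.card_eq_sum_card_fiberwise (fun j _ => Finset.mem_coe.2 (Finset.mem_univ (col j)))).symm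
  have hpart : (Finset.univ.filter poor).card + W.card = k ^ 4 := by
    have := Finset.card_filter_add_card_filter_not (s := (Finset.univ : Finset (Fin (k ^ 4)))) poor
    simpa using this
  have hdiff : ∀ i : Fin k, |(S i.succ : ℝ) - S 0| < k + 1 := by
    intro i
    have hW : ∑ j ∈ W, r j i = (S i.succ : ℝ) - S 0 := by
      have : ∀ j ∈ W, r j i
          = (if col j = i.succ then (1 : ℝ) else 0) - (if col j = 0 then 1 else 0) := by
        intro j hj
        rw [hwell j (Finset.mem_filter.1 hj).2, incVec_eq]
      rw [Finset.sum_congr rfl this, Finset.sum_sub_distrib, Finset.sum_boole, Finset.sum_boole]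
    have hP : |∑ j ∈ Finset.univ.filter poor, r j i| ≤ k := by
      calc |∑ j ∈ Finset.univ.filter poor, r j i|
          ≤ ∑ j ∈ Finset.univ.filter poor, |r j i| := Finset.abs_sum_le_sum_abs _ _
        _ ≤ ∑ j ∈ Finset.univ.filter poor, (1 : ℝ) :=
            Finset.sum_le_sum fun j hj => hpoor j (Finset.mem_filter.1 hj).2 i
        _ ≤ k := by simpa using hcard
    have hs := hsum i
    rw [← Finset.sum_filter_add_sum_filter_not Finset.univ poor, hW] at hs
    rw [abs_lt] at hs ⊢
    rw [abs_le] at hP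
    constructor <;> linarith [hs.1, hs.2, hP.1, hP.2]
  have hpos : 0 < S c := by
    refine count_pos hk S (by omega) (fun i => ?_) (fun i => ?_) c
    · have := (abs_lt.1 (hdiff i)).2
      have : S i.succ < S 0 + k + 1 := by
        exact_mod_cast (by linarith : (S i.succ : ℝ) < S 0 + k + 1)
      omega
    · have := (abs_lt.1 (hdiff i)).1
      have : S 0 < S i.succ + k + 1 := by
        exact_mod_cast (by linarith : (S 0 : ℝ) < S i.succ + k + 1)
      omega
  obtain ⟨j, hj⟩ := Finset.card_pos.1 hpos
  rw [Finset.mem_filter, Finset.mem_filter] at hj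
  exact ⟨j, hj.1.2, hj.2⟩

/-- `k`-dimensional sampling lemma.  If each sampled point
`p^j = p + ((j−1)/L)(1,…,1)`, `j = 1,…,k⁴`, contributes a vector `r^j` which
equals `ζ(p^j) = e^{g(π(p^j))}` when `p^j` is well-positioned and satisfies
`‖r^j‖_∞ ≤ 1` when it is poorly positioned, and `‖Σ_j r^j‖_∞ < 1`, then
`Q_w = {π(p^j) : p^j well-positioned}` is contained in the unit hypercube
`K_{π(p)}` and contains a point of every color, i.e. it yields a panchromatic
simplex. -/
theorem sampling_lemma_panchromatic
    (k n : ℕ) (hk : 2 ≤ k) (hn : 1 ≤ n)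
    (L : ℝ) (hL : (k : ℝ) ^ 4 < L)
    (g : (Fin k → ℤ) → Fin (k + 1)) (hg : ValidColoring n k g)
    (p : Fin k → ℝ) (hp : ∀ i, 0 ≤ p i ∧ p i ≤ 2 ^ n - 1)
    (r : Fin (k ^ 4) → Fin k → ℝ)
    (hpoor : ∀ j : Fin (k ^ 4),
      (∃ i : Fin k, PoorlyPositioned L (p i + (j : ℝ) / L)) →
        ∀ i, |r j i| ≤ 1)
    (hwell : ∀ j : Fin (k ^ 4),
      (∀ i : Fin k, ¬ PoorlyPositioned L (p i + (j : ℝ) / L)) →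
        r j = incVec k (g (gridPoint n k (fun i => p i + (j : ℝ) / L))))
    (hsum : ∀ i : Fin k, |∑ j : Fin (k ^ 4), r j i| < 1) :
    (∀ q ∈ {q | ∃ j : Fin (k ^ 4),
        (∀ i : Fin k, ¬ PoorlyPositioned L (p i + (j : ℝ) / L)) ∧
        q = gridPoint n k (fun i => p i + (j : ℝ) / L)},
      q ∈ unitCube (gridPoint n k p)) ∧
    (∀ c : Fin (k + 1), ∃ q ∈ {q | ∃ j : Fin (k ^ 4),
        (∀ i : Fin k, ¬ PoorlyPositioned L (p i + (j : ℝ) / L)) ∧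
        q = gridPoint n k (fun i => p i + (j : ℝ) / L)},
      g q = c) := by
  have hL' : ((k ^ 4 : ℕ) : ℝ) < L := by exact_mod_cast hL
  have hN : 1 ≤ k ^ 4 := Nat.one_le_pow _ _ (by omega)
  have hL0 : 0 < L := lt_of_le_of_lt (Nat.cast_nonneg _) hL'
  refine ⟨?_, fun c => ?_⟩
  · rintro q ⟨j, -, rfl⟩
    refine gridPoint_shift_mem_unitCube n k p _ (by positivity) ?_
    rw [div_lt_one hL0]
    have : (j : ℝ) < (k ^ 4 : ℕ) := by exact_mod_cast j.2
    linarith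
  · let poor : Fin (k ^ 4) → Prop := fun j => ∃ i : Fin k, PoorlyPositioned L (p i + (j : ℝ) / L)
    have hcard : {j | poor j}.ncard ≤ k := by
      -- Sending a poor sample to a coordinate witnessing this is injective.
      choose f hf using fun j : {j | poor j} => j.2
      have hinj : Function.Injective f := by
        intro a b hab
        have ha := hf a
        have hb := hf b
        rw [hab] at ha
        rcases lt_trichotomy (a : Fin (k ^ 4)) b with h | h | h
        · exact (poor_unique hN hL' _ h b.1.2 ha hb).elim
        · exact Subtype.ext h
        · exact (poor_unique hN hL' _ h a.1.2 hb ha).elim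
      have := Nat.card_le_card_of_injective f hinj
      rwa [Nat.card_coe_set_eq, Nat.card_fin] at this
    obtain ⟨j, hj, hc⟩ := exists_color hk poor hcard
      (fun j => g (gridPoint n k (fun i => p i + (j : ℝ) / L))) r hpoor
      (fun j hj => hwell j (not_exists.1 hj)) hsum c
    exact ⟨_, ⟨j, not_exists.1 hj, rfl⟩, hc⟩
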